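/- For all integers T, p ≥ 1 there exists a finite set 𝒵 ⊂ ℝ^{Tp} with cardinality |𝒵| ≤ 16π·(Tp)^{3/2} such that ‖z‖_∞ ≤ 1 for every z ∈ 𝒵, and such that for every v̄ ∈ ℝ^{Tp} and every n ≥ 1, ‖Toep_{T,n}(v̄)‖_op ≤ 4·max_{z∈𝒵} ⟨z, v̄⟩. -/

import Mathlib

/-- ℓ₂→ℓ₂ operator norm of a real matrix. -/
noncomputable def opNorm {α β : Type*} [Fintype α] [Fintype β] [DecidableEq β]
    (A : Matrix α β ℝ) : ℝ :=
  ‖LinearMap.toContinuousLinearMap (Matrix.toEuclideanLin A)‖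

/-- The banded block-Toeplitz matrix `Toep_{T,n}(v̄)` whose `(i,j)`-th `1×p` block is
`v_{T−(j−i)}ᵀ` when `0 ≤ j−i ≤ T−1` and zero otherwise. -/
noncomputable def Toep (T p n : ℕ) (v : Fin T → Fin p → ℝ) :
    Matrix (Fin n) (Fin (n + T - 1) × Fin p) ℝ :=
  Matrix.of fun i jk =>
    if h : (i : ℕ) ≤ (jk.1 : ℕ) ∧ (jk.1 : ℕ) - (i : ℕ) < T ∧
        T - 1 - ((jk.1 : ℕ) - (i : ℕ)) < T
    then v ⟨T - 1 - ((jk.1 : ℕ) - (i : ℕ)), h.2.2⟩ jk.2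
    else 0

open Finset in
lemma parseval_aux {N : ℕ} [NeZero N] {ι : Type*} [Fintype ι] (e : ι → ZMod N)
    (he : Function.Injective e) (f : ι → ℂ) :
    ∑ r : ZMod N, ‖∑ x, ZMod.stdAddChar (r * e x) * f x‖ ^ 2 = N * ∑ x, ‖f x‖ ^ 2 := by
  classical
  have key : ∀ r : ZMod N, ((‖∑ x, ZMod.stdAddChar (r * e x) * f x‖ ^ 2 : ℝ) : ℂ)
      = ∑ x, ∑ y, f x * (starRingEnd ℂ) (f y) * ZMod.stdAddChar (r * (e x - e y)) := by
    intro r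
    rw [Complex.ofReal_pow, ← Complex.mul_conj', map_sum, Finset.sum_mul_sum]
    refine Finset.sum_congr rfl fun x _ => Finset.sum_congr rfl fun y _ => ?_
    rw [map_mul (starRingEnd ℂ), ← AddChar.map_neg_eq_conj, mul_sub, sub_eq_add_neg, AddChar.map_add_eq_mul]
    ring
  have : ((∑ r : ZMod N, ‖∑ x, ZMod.stdAddChar (r * e x) * f x‖ ^ 2 : ℝ) : ℂ)
      = ((N * ∑ x, ‖f x‖ ^ 2 : ℝ) : ℂ) := by
    rw [Complex.ofReal_sum]
    simp_rw [key]
    rw [Finset.sum_comm]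
    simp_rw [Finset.sum_comm (s := (univ : Finset (ZMod N)))]
    simp_rw [← Finset.mul_sum, AddChar.sum_mulShift _ (ZMod.isPrimitive_stdAddChar N)]
    simp only [sub_eq_zero, he.eq_iff, ZMod.card]
    simp only [Nat.cast_ite, Nat.cast_zero, mul_ite, mul_zero, Finset.sum_ite_eq, Finset.mem_univ, if_true]
    push_cast
    rw [Finset.mul_sum]
    refine Finset.sum_congr rfl fun x _ => ?_
    rw [Complex.mul_conj']
    ring
  exact_mod_cast this

lemma conv_bound {N p : ℕ} [NeZero N] (w : ZMod N → Fin p → ℂ) (y : ZMod N → Fin p → ℂ) (B : ℝ)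
    (hB : ∀ r : ZMod N, ∑ k, ‖∑ d, ZMod.stdAddChar (r * d) * w d k‖ ^ 2 ≤ B) :
    ∑ i, ‖∑ d, ∑ k, w d k * y (i + d) k‖ ^ 2 ≤ B * ∑ j, ∑ k, ‖y j k‖ ^ 2 := by
  have hN : (0 : ℝ) < N := by exact_mod_cast Nat.pos_of_ne_zero (NeZero.ne N)
  have h1 := parseval_aux (N := N) id Function.injective_id
    (fun i => ∑ d, ∑ k, w d k * y (i + d) k)
  have h2 : ∀ r : ZMod N, ∑ x, ZMod.stdAddChar (r * id x) * (∑ d, ∑ k, w d k * y (x + d) k)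
      = ∑ k, (∑ d, ZMod.stdAddChar (-r * d) * w d k) * (∑ j, ZMod.stdAddChar (r * id j) * y j k) := by
    intro r
    simp_rw [Finset.sum_mul, Finset.mul_sum]
    rw [Finset.sum_comm, Finset.sum_comm (s := (Finset.univ : Finset (Fin p)))]
    refine Finset.sum_congr rfl fun d _ => ?_
    rw [Finset.sum_comm]
    refine Finset.sum_congr rfl fun k _ => ?_
    rw [← Equiv.sum_comp (Equiv.addRight d)
      (fun j => ZMod.stdAddChar (-r * d) * w d k * (ZMod.stdAddChar (r * id j) * y j k))]
    refine Finset.sum_congr rfl fun x _ => ?_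
    have : r * id x = -r * d + r * id (Equiv.addRight d x) := by simp; ring
    rw [this, AddChar.map_add_eq_mul]
    simp only [Equiv.coe_addRight, id]
    ring
  have h3 : ∀ r : ZMod N, ‖∑ x, ZMod.stdAddChar (r * id x) * (∑ d, ∑ k, w d k * y (x + d) k)‖ ^ 2
      ≤ B * ∑ k, ‖∑ j, ZMod.stdAddChar (r * id j) * y j k‖ ^ 2 := by
    intro r
    rw [h2]
    calc _ ≤ (∑ k, ‖∑ d, ZMod.stdAddChar (-r * d) * w d k‖
              * ‖∑ j, ZMod.stdAddChar (r * id j) * y j k‖) ^ 2 := by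
          gcongr
          refine (norm_sum_le _ _).trans (le_of_eq ?_)
          simp_rw [norm_mul]
      _ ≤ _ := Finset.sum_mul_sq_le_sq_mul_sq _ _ _
      _ ≤ _ := by
          gcongr
          exact hB _
  have h4 := Finset.sum_le_sum fun r (_ : r ∈ (Finset.univ : Finset (ZMod N))) => h3 r
  rw [h1, ← Finset.mul_sum, Finset.sum_comm] at h4
  simp_rw [fun k => parseval_aux (N := N) id Function.injective_id (fun j => y j k)] at h4
  rw [← Finset.mul_sum, Finset.sum_comm] at h4
  refine le_of_mul_le_mul_left ?_ hN
  linarith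

lemma sum_range_block (a : ℕ → ℝ) (n T : ℕ) :
    ∑ i ∈ Finset.range (n * T), a i = ∑ q ∈ Finset.range n, ∑ s ∈ Finset.range T, a (q * T + s) := by
  induction n with
  | zero => simp
  | succ n ih => rw [Finset.sum_range_succ, ← ih, add_mul, one_mul, Finset.sum_range_add]

lemma block_bound {T p : ℕ} [NeZero (2 * T)] (hT : 1 ≤ T) (w : ℕ → Fin p → ℝ) (Y : ℕ → Fin p → ℝ) (B : ℝ)
    (hB : ∀ r : ZMod (2 * T), ∑ k, ‖∑ d ∈ Finset.range T,
      ZMod.stdAddChar (r * (d : ZMod (2 * T))) * (w d k : ℂ)‖ ^ 2 ≤ B) :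
    ∑ s ∈ Finset.range T, (∑ d ∈ Finset.range T, ∑ k, w d k * Y (s + d) k) ^ 2
      ≤ B * ∑ j ∈ Finset.range (2 * T), ∑ k, (Y j k) ^ 2 := by
  have sumZ : ∀ {M : Type} [AddCommMonoid M] (f : ZMod (2 * T) → M),
      ∑ x, f x = ∑ i ∈ Finset.range (2 * T), f (i : ZMod (2 * T)) := by
    intro M _ f
    symm
    refine Finset.sum_bij (fun i _ => (i : ZMod (2 * T))) ?_ ?_ ?_ ?_
    · simp
    · intro a ha b hb h
      have := congrArg ZMod.val h
      rwa [ZMod.val_cast_of_lt (by simpa using ha), ZMod.val_cast_of_lt (by simpa using hb)] at this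
    · intro b _
      exact ⟨b.val, by simpa using ZMod.val_lt b, by simp⟩
    · simp
  let W : ZMod (2 * T) → Fin p → ℂ := fun x k => if x.val < T then (w x.val k : ℂ) else 0
  let y : ZMod (2 * T) → Fin p → ℂ := fun x k => (Y x.val k : ℂ)
  have sumT : ∀ {M : Type} [AddCommMonoid M] (f : ZMod (2 * T) → M),
      (∀ x, ¬ x.val < T → f x = 0) → ∑ x, f x = ∑ i ∈ Finset.range T, f (i : ZMod (2 * T)) := by
    intro M _ f hf
    rw [sumZ]
    refine (Finset.sum_subset (Finset.range_mono (by omega)) ?_).symm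
    intro x hx hx'
    apply hf
    rw [ZMod.val_cast_of_lt (by simpa using hx)]
    simpa using hx'
  have hv : ∀ i, i < 2 * T → (i : ZMod (2 * T)).val = i := fun i hi => ZMod.val_cast_of_lt hi
  have h := conv_bound W y B (by
    intro r
    refine le_trans (le_of_eq ?_) (hB r)
    refine Finset.sum_congr rfl fun k _ => ?_
    rw [sumT _ (fun x hx => by simp [W, hx])]
    congr 2
    refine Finset.sum_congr rfl fun d hd => ?_
    have hd : d < T := by simpa using hd
    simp [W, hv d (by omega), hd])
  rw [sumZ, sumZ] at h
  have hR : ∑ i ∈ Finset.range (2 * T), ∑ k, ‖y (i : ZMod (2 * T)) k‖ ^ 2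
      = ∑ j ∈ Finset.range (2 * T), ∑ k, (Y j k) ^ 2 := by
    refine Finset.sum_congr rfl fun i hi => Finset.sum_congr rfl fun k _ => ?_
    simp [y, hv i (by simpa using hi)]
  rw [hR] at h
  refine le_trans ?_ h
  calc _ = ∑ i ∈ Finset.range T, ‖∑ d, ∑ k, W d k * y ((i : ZMod (2 * T)) + d) k‖ ^ 2 := by
        refine Finset.sum_congr rfl fun s hs => ?_
        have hs : s < T := by simpa using hs
        rw [sumT _ (fun x hx => by simp [W, hx])]
        rw [← sq_abs, ← Real.norm_eq_abs, ← Complex.norm_real]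
        congr 2
        push_cast
        refine Finset.sum_congr rfl fun d hd => Finset.sum_congr rfl fun k _ => ?_
        have hd : d < T := by simpa using hd
        have : ((s : ZMod (2 * T)) + (d : ZMod (2 * T))) = ((s + d : ℕ) : ZMod (2 * T)) := by simp
        simp only [W, y]
        rw [this, hv d (by omega), hv (s + d) (by omega), if_pos hd]
    _ ≤ _ := Finset.sum_le_sum_of_subset_of_nonneg (Finset.range_mono (by omega))
        (fun _ _ _ => by positivity)

lemma rows_bound {T p : ℕ} [NeZero (2 * T)] (hT : 1 ≤ T) (w : ℕ → Fin p → ℝ) (Y : ℕ → Fin p → ℝ) (B : ℝ) (hB0 : 0 ≤ B)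
    (hB : ∀ r : ZMod (2 * T), ∑ k, ‖∑ d ∈ Finset.range T,
      ZMod.stdAddChar (r * (d : ZMod (2 * T))) * (w d k : ℂ)‖ ^ 2 ≤ B) (n m : ℕ)
    (hY : ∀ j, m ≤ j → ∀ k, Y j k = 0) :
    ∑ s ∈ Finset.range n, (∑ d ∈ Finset.range T, ∑ k, w d k * Y (s + d) k) ^ 2
      ≤ 2 * B * ∑ j ∈ Finset.range m, ∑ k, (Y j k) ^ 2 := by
  let b : ℕ → ℝ := fun j => ∑ k, (Y j k) ^ 2
  have hb0 : ∀ j, 0 ≤ b j := fun j => Finset.sum_nonneg fun _ _ => sq_nonneg _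
  have hbm : ∀ j, m ≤ j → b j = 0 := fun j hj => Finset.sum_eq_zero fun k _ => by simp [hY j hj k]
  have tail : ∀ c M : ℕ, ∑ i ∈ Finset.range M, b (c + i) ≤ ∑ j ∈ Finset.range m, b j := by
    intro c M
    calc _ ≤ ∑ i ∈ Finset.range c, b i + ∑ i ∈ Finset.range M, b (c + i) :=
          le_add_of_nonneg_left (Finset.sum_nonneg fun _ _ => hb0 _)
      _ = ∑ i ∈ Finset.range (c + M), b i := (Finset.sum_range_add _ _ _).symm
      _ ≤ ∑ i ∈ Finset.range (m + (c + M)), b i :=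
          Finset.sum_le_sum_of_subset_of_nonneg (Finset.range_mono (by omega)) (fun _ _ _ => hb0 _)
      _ = _ := by
          rw [Finset.sum_range_add, Finset.sum_eq_zero (s := Finset.range (c + M)), add_zero]
          intro x _
          exact hbm _ (by omega)
  calc _ ≤ ∑ s ∈ Finset.range (n * T), (∑ d ∈ Finset.range T, ∑ k, w d k * Y (s + d) k) ^ 2 :=
        Finset.sum_le_sum_of_subset_of_nonneg (Finset.range_mono (by nlinarith))
          (fun _ _ _ => sq_nonneg _)
    _ = ∑ q ∈ Finset.range n, ∑ s ∈ Finset.range T,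
          (∑ d ∈ Finset.range T, ∑ k, w d k * Y (q * T + s + d) k) ^ 2 := sum_range_block _ _ _
    _ ≤ ∑ q ∈ Finset.range n, B * ∑ j ∈ Finset.range (2 * T), b (q * T + j) := by
        refine Finset.sum_le_sum fun q _ => ?_
        have := block_bound hT w (fun j => Y (q * T + j)) B hB
        simpa only [add_assoc] using this
    _ = B * (∑ i ∈ Finset.range (n * T), b (0 + i) + ∑ i ∈ Finset.range (n * T), b (T + i)) := by
        rw [← Finset.mul_sum, sum_range_block (fun i => b (0 + i)), sum_range_block (fun i => b (T + i)),
          ← Finset.sum_add_distrib]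
        congr 1
        refine Finset.sum_congr rfl fun q _ => ?_
        rw [two_mul, Finset.sum_range_add]
        congr 1
        · simp
        · refine Finset.sum_congr rfl fun i _ => ?_
          congr 1; ring
    _ ≤ _ := by
        have h1 := tail 0 (n * T)
        have h2 := tail T (n * T)
        have := mul_le_mul_of_nonneg_left (add_le_add h1 h2) hB0
        refine this.trans (le_of_eq ?_)
        ring

lemma toep_row (T p n : ℕ) (hT : 1 ≤ T) (v : Fin T → Fin p → ℝ) (x : Fin (n + T - 1) × Fin p → ℝ)
    (w Y : ℕ → Fin p → ℝ) (hw : ∀ (d : ℕ) (hd : d < T) k, w d k = v (Fin.rev ⟨d, hd⟩) k)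
    (hY : ∀ j : Fin (n + T - 1), ∀ k, Y j k = x (j, k)) (i : Fin n) :
    (Toep T p n v).mulVec x i = ∑ d ∈ Finset.range T, ∑ k, w d k * Y (i + d) k := by
  have hi := i.2
  rw [Matrix.mulVec, dotProduct, Fintype.sum_prod_type]
  symm
  refine Finset.sum_of_injOn (fun d => if h : (i : ℕ) + d < n + T - 1 then ⟨i + d, h⟩ else ⟨0, by omega⟩)
    ?_ ?_ ?_ ?_
  · intro a ha b hb h
    have ha : a < T := by simpa using ha
    have hb : b < T := by simpa using hb
    simp only [show (i : ℕ) + a < n + T - 1 by omega, show (i : ℕ) + b < n + T - 1 by omega, dif_pos,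
      Fin.mk.injEq] at h
    omega
  · intro _ _; simp
  · intro j _ hj
    refine Finset.sum_eq_zero fun k _ => ?_
    rw [Toep, Matrix.of_apply, dif_neg, zero_mul]
    rintro ⟨h1, h2, h3⟩
    apply hj
    refine ⟨(j : ℕ) - i, by simpa using h2, ?_⟩
    have hj2 := j.2
    apply Fin.ext
    simp only
    rw [dif_pos (by omega)]
    simp only at h1 ⊢
    omega
  · intro d hd
    have hd : d < T := by simpa using hd
    have hlt : (i : ℕ) + d < n + T - 1 := by omega
    refine Finset.sum_congr rfl fun k _ => ?_
    simp only [dif_pos hlt]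
    rw [← hY ⟨i + d, hlt⟩ k, hw d hd, Toep, Matrix.of_apply,
      dif_pos ⟨by simp, by simp only; omega, by simp only; omega⟩]
    congr 3
    apply Fin.ext
    simp [Fin.rev]
    omega

lemma stmt6_card (T p : ℕ) (hT : 1 ≤ T) (hp : 1 ≤ p) :
    ((2 * T * p * 4 : ℕ) : ℝ) ≤ 16 * Real.pi * ((T : ℝ) * p) ^ ((3 : ℝ) / 2) := by
  have hT' : (1 : ℝ) ≤ T := by exact_mod_cast hT
  have hp' : (1 : ℝ) ≤ p := by exact_mod_cast hp
  have h1 : (1 : ℝ) ≤ (T : ℝ) * p := by nlinarith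
  have h2 : (T : ℝ) * p ≤ ((T : ℝ) * p) ^ ((3 : ℝ) / 2) := by
    conv_lhs => rw [← Real.rpow_one ((T : ℝ) * p)]
    exact Real.rpow_le_rpow_of_exponent_le h1 (by norm_num)
  have h3 := Real.pi_gt_three
  push_cast
  nlinarith

theorem stmt6 (T p : ℕ) (hT : 1 ≤ T) (hp : 1 ≤ p) :
    ∃ Z : Set (Fin T → Fin p → ℝ), Z.Finite ∧ Z.Nonempty ∧
      (Nat.card Z : ℝ) ≤ 16 * Real.pi * ((T : ℝ) * p) ^ ((3 : ℝ) / 2) ∧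
      (∀ z ∈ Z, ∀ i k, |z i k| ≤ 1) ∧
      ∀ (v : Fin T → Fin p → ℝ) (n : ℕ), 1 ≤ n →
        opNorm (Toep T p n v) ≤
          4 * sSup ((fun z : Fin T → Fin p → ℝ => ∑ i, ∑ k, z i k * v i k) '' Z) := by
  have i1 : NeZero (2 * T) := ⟨by omega⟩
  have i2 : NeZero p := ⟨by omega⟩
  let χ : ZMod (2 * T) → ZMod p → Fin T → Fin p → ℂ := fun r l i k =>
    ZMod.stdAddChar (r * ((Fin.rev i : ℕ) : ZMod (2 * T))) * ZMod.stdAddChar (l * ((k : ℕ) : ZMod p))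
  have hχ : ∀ r l i k, ‖χ r l i k‖ = 1 := by
    intro r l i k
    simp [χ]
  let F : ZMod (2 * T) × ZMod p × Fin 4 → Fin T → Fin p → ℝ := fun a i k =>
    ![(χ a.1 a.2.1 i k).re, -(χ a.1 a.2.1 i k).re, (χ a.1 a.2.1 i k).im, -(χ a.1 a.2.1 i k).im] a.2.2
  have hfin : (Set.range F).Finite := Set.finite_range F
  refine ⟨Set.range F, hfin, ⟨F (0, 0, 0), _, rfl⟩, ?_, ?_, ?_⟩
  · refine le_trans ?_ (stmt6_card T p hT hp)
    have h := Finite.card_range_le F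
    simp only [Nat.card_eq_fintype_card, Fintype.card_prod, ZMod.card, Fintype.card_fin] at h
    rw [← mul_assoc] at h
    rw [Nat.card_eq_fintype_card] at *
    exact_mod_cast h
  · rintro _ ⟨⟨r, l, s⟩, rfl⟩ i k
    have h1 := (Complex.abs_re_le_norm (χ r l i k)).trans_eq (hχ r l i k)
    have h2 := (Complex.abs_im_le_norm (χ r l i k)).trans_eq (hχ r l i k)
    fin_cases s <;> simp [F, h1, h2]
  intro v n hn
  set S := sSup ((fun z : Fin T → Fin p → ℝ => ∑ i, ∑ k, z i k * v i k) '' Set.range F) with hS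
  have hle : ∀ a, ∑ i, ∑ k, F a i k * v i k ≤ S := fun a =>
    le_csSup (hfin.image _).bddAbove ⟨F a, ⟨a, rfl⟩, rfl⟩
  have hre : ∀ r l, (∑ i, ∑ k, χ r l i k * (v i k : ℂ)).re = ∑ i, ∑ k, (χ r l i k).re * v i k := by
    intro r l
    simp [Complex.re_sum]
  have him : ∀ r l, (∑ i, ∑ k, χ r l i k * (v i k : ℂ)).im = ∑ i, ∑ k, (χ r l i k).im * v i k := by
    intro r l
    simp [Complex.im_sum]
  have hnorm : ∀ r l, ‖∑ i, ∑ k, χ r l i k * (v i k : ℂ)‖ ^ 2 ≤ 2 * S ^ 2 := by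
    intro r l
    rw [Complex.sq_norm, Complex.normSq_apply, hre, him]
    have h0 := hle (r, l, 0)
    have h1 := hle (r, l, 1)
    have h2 := hle (r, l, 2)
    have h3 := hle (r, l, 3)
    simp only [F, Matrix.cons_val, neg_mul, Finset.sum_neg_distrib] at h0 h1 h2 h3
    have e1 := sq_le_sq' (by linarith) h0
    have e2 := sq_le_sq' (by linarith) h2
    nlinarith
  have hS0 : 0 ≤ S := by
    have h0 := hle (0, 0, 0)
    have h1 := hle (0, 0, 1)
    simp only [F, Matrix.cons_val, neg_mul, Finset.sum_neg_distrib] at h0 h1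
    linarith
  let w : ℕ → Fin p → ℝ := fun d k => if hd : d < T then v (Fin.rev ⟨d, hd⟩) k else 0
  have hw : ∀ (d : ℕ) (hd : d < T) k, w d k = v (Fin.rev ⟨d, hd⟩) k := by
    intro d hd k
    simp [w, hd]
  have hp0 : (0 : ℝ) < p := by exact_mod_cast hp
  have hB : ∀ r : ZMod (2 * T), ∑ k, ‖∑ d ∈ Finset.range T,
      ZMod.stdAddChar (r * (d : ZMod (2 * T))) * (w d k : ℂ)‖ ^ 2 ≤ 2 * S ^ 2 := by
    intro r
    have hinj : Function.Injective (fun k : Fin p => ((k : ℕ) : ZMod p)) := by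
      intro a b h
      have := congrArg ZMod.val h
      simp only at this
      rw [ZMod.val_cast_of_lt a.2, ZMod.val_cast_of_lt b.2] at this
      exact Fin.ext this
    have hP := parseval_aux _ hinj (fun k => ∑ d ∈ Finset.range T,
      ZMod.stdAddChar (r * (d : ZMod (2 * T))) * (w d k : ℂ))
    refine le_of_mul_le_mul_left ?_ hp0
    rw [← hP]
    calc _ ≤ ∑ l : ZMod p, 2 * S ^ 2 := by
          refine Finset.sum_le_sum fun l _ => ?_
          refine le_trans (le_of_eq ?_) (hnorm r l)
          congr 2
          simp_rw [Finset.mul_sum]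
          rw [Finset.sum_comm, Finset.sum_range, ← Equiv.sum_comp Fin.revPerm
            (fun i => ∑ k, χ r l i k * (v i k : ℂ))]
          refine Finset.sum_congr rfl fun d _ => Finset.sum_congr rfl fun k _ => ?_
          rw [hw d d.2]
          simp only [χ, Fin.revPerm_apply, Fin.rev_rev, Fin.eta]
          ring
      _ = _ := by simp [ZMod.card]
  refine ContinuousLinearMap.opNorm_le_bound _ (by positivity) fun x => ?_
  refine le_of_sq_le_sq ?_ (by positivity)
  let Y : ℕ → Fin p → ℝ := fun j k => if hj : j < n + T - 1 then x (⟨j, hj⟩, k) else 0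
  have hrow := toep_row T p n hT v x.ofLp w Y hw (by intro j k; simp [Y])
  have hmain := rows_bound hT w Y (2 * S ^ 2) (by positivity) hB n (n + T - 1)
    (by intro j hj k; simp [Y, not_lt.mpr hj])
  have hL : ‖LinearMap.toContinuousLinearMap (Matrix.toEuclideanLin (Toep T p n v)) x‖ ^ 2
      = ∑ s ∈ Finset.range n, (∑ d ∈ Finset.range T, ∑ k, w d k * Y (s + d) k) ^ 2 := by
    rw [EuclideanSpace.norm_sq_eq, Finset.sum_range]
    refine Finset.sum_congr rfl fun i _ => ?_
    rw [← hrow i]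
    simp [Matrix.toEuclideanLin_apply]
  have hR : ‖x‖ ^ 2 = ∑ j ∈ Finset.range (n + T - 1), ∑ k, (Y j k) ^ 2 := by
    rw [EuclideanSpace.norm_sq_eq, Finset.sum_range, Fintype.sum_prod_type]
    refine Finset.sum_congr rfl fun i _ => Finset.sum_congr rfl fun k _ => ?_
    simp [Y]
  rw [hL, mul_pow, hR]
  refine hmain.trans ?_
  have : 0 ≤ ∑ j ∈ Finset.range (n + T - 1), ∑ k, (Y j k) ^ 2 := by positivity
  nlinarith [mul_nonneg (sq_nonneg S) this]
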